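/- For every finite alphabet A (|A| ≥ 2), every degree d, and every constant η > 0, there exist constants ε₀ > 0 and δ > 0 such that for all sufficiently large n the following holds: if ψ is a 2CSP instance over A on n variables whose constraint graph is d-regular and OPT(ψ) < 1 − η, then every set S of vertices of the product graph G_ψ with |S| = ⌊k·N^{−ε₀/log log N}⌋ satisfies den(S) < 1 − δ. -/

import Mathlib

/-!
The proof is a direct counting argument, without entropy. Write `a = |A|`. Since
`log log N ≥ (log n) / 2`, the set `S` has at least about `2^(-4 ε₀ ρ) · C(n, ρ)` elements
(`kprime_lower`), so it suffices to extract from a dense `S` an assignment of value at least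
`1 - η`, or else to bound `|S|` by `C(n, ρ) · exp(-Ω(ηρ))`.

Let `Ustar` be the set of variables chosen by at least an `ερ/n` fraction of `S`; a typical
`v ∈ S` chooses at most `2ερ` variables outside `Ustar`. Start from the vertices `v` with this
property and with almost full degree into `S`, and intersect their set greedily with the
neighbourhoods of `u₁, u₂, … ∈ S`: at each step almost every `u ∈ S` is adjacent to at least half
of the current set, and `u` is accepted if it moreover covers `κρ` new variables of `Ustar`. There
are at most `n/(κρ) = o(ρ)` steps, because `ρ²/n → ∞`, so the final set `Q` still has size
`2^(-o(ρ)) |S|`. When the process stops, almost every `u ∈ S` chooses fewer than `κρ` uncovered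
variables of `Ustar`; as each of those is chosen by an `ερ/n` fraction of `S`, only `O(κn/ε)` of
them remain. This is `exists_list`.

All of `Q` is adjacent to all of `L = {u₁, u₂, …}`. Hence the labels of `L` form one assignment on
`cover L` with which every `v ∈ Q` agrees, and it satisfies every constraint inside
`cover L ∩ cover Q` (`exists_assignment`). If this set had more than `(1 - η/2) n` elements, a
`1 - η` fraction of the constraints would be satisfied. Otherwise `Q` consists of vertices whose
set lies, up to `2ερ` elements, in a set of about `(1 - η/2) n` variables and whose labels are free
on few variables only; a weighted Maclaurin inequality shows that there are at most
`C(n, ρ) · exp(-Ω(ηρ))` of them (`factorial_mul_card_le`), which contradicts the lower bound on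
`|Q|` (`counting_contradiction`).
-/

open Classical Finset

noncomputable section

/-- Binary entropy function (base 2). -/
def binEnt (p : ℝ) : ℝ := -(p * Real.logb 2 p) - (1 - p) * Real.logb 2 (1 - p)

/-- Entropy (base 2) of the random variable `f` under the uniform distribution on `S`. -/
def fEnt {V B : Type*} [Fintype B] (S : Finset V) (f : V → B) : ℝ :=
  ∑ b : B,
    -((((S.filter fun v => f v = b).card : ℝ) / (S.card : ℝ)) *
      Real.logb 2 (((S.filter fun v => f v = b).card : ℝ) / (S.card : ℝ)))

/-- Conditional entropy `H(f | g)` under the uniform distribution on `S`. -/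
def cEnt {V B C : Type*} [Fintype B] [Fintype C] (S : Finset V) (f : V → B) (g : V → C) : ℝ :=
  ∑ c : C, (((S.filter fun v => g v = c).card : ℝ) / (S.card : ℝ)) *
      fEnt (S.filter fun v => g v = c) f

/-- Probability of the event `P` under the uniform distribution on `S`. -/
def prS {V : Type*} (S : Finset V) (P : V → Prop) : ℝ :=
  ((S.filter P).card : ℝ) / (S.card : ℝ)

/-- A 2CSP instance on `n` variables over alphabet `A`: an undirected constraint graph
together with a relation on each constraint edge. -/
structure CSP (n : ℕ) (A : Type*) where
  adj : Fin n → Fin n → Prop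
  symm : ∀ {i j}, adj i j → adj j i
  irrefl : ∀ i, ¬ adj i i
  rel : Fin n → Fin n → A → A → Prop
  rel_symm : ∀ i j a b, rel i j a b ↔ rel j i b a

/-- ρ = ⌈√n · log log n⌉. -/
def rho (n : ℕ) : ℕ := ⌈Real.sqrt n * Real.logb 2 (Real.logb 2 n)⌉₊

/-- k = C(n, ρ). -/
def kk (n : ℕ) : ℕ := n.choose (rho n)

/-- N = C(n,ρ)·|A|^ρ, the number of vertices of the product graph. -/
def NN (n a : ℕ) : ℕ := n.choose (rho n) * a ^ (rho n)

/-- k' = k · N^(−ε₀ / log log N). -/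
def kprime (n a : ℕ) (ε₀ : ℝ) : ℝ :=
  (kk n : ℝ) * (NN n a : ℝ) ^ (-(ε₀ / Real.logb 2 (Real.logb 2 (NN n a))))

/-- Vertices of the product graph: pairs (T, y) with T ⊆ {1,…,n}, |T| = ρ, y : T → A. -/
abbrev Vtx (n ρ : ℕ) (A : Type*) := Σ T : {T : Finset (Fin n) // T.card = ρ}, (↥T.1 → A)

variable {n ρ : ℕ} {A : Type*} [Fintype A] [DecidableEq A]

/-- X_i : indicator of the event that variable i is chosen by vertex v. -/
def Xb (v : Vtx n ρ A) (i : Fin n) : Bool := decide (i ∈ v.1.1)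

/-- Y_i : value of vertex v on variable i (default a₀ if i is not chosen). -/
def Yv (a₀ : A) (v : Vtx n ρ A) (i : Fin n) : A :=
  if h : i ∈ v.1.1 then v.2 ⟨i, h⟩ else a₀

/-- Type of prefix values: (X₁,…,X_{i},Y₁,…,Y_{i}) padded with defaults. -/
abbrev Pfx (n : ℕ) (A : Type*) := (Fin n → Bool) × (Fin n → A)

/-- W_{i-1} : the prefix of v consisting of (X_j, Y_j) for j < i (0-indexed cutoff i). -/
def Wp (a₀ : A) (i : ℕ) (v : Vtx n ρ A) : Pfx n A :=
  (fun j => if (j : ℕ) < i then Xb v j else false,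
   fun j => if (j : ℕ) < i then Yv a₀ v j else a₀)

/-- q_i = Pr[X_i = 1]. -/
def qi (S : Finset (Vtx n ρ A)) (i : Fin n) : ℝ := prS S (fun v => Xb v i = true)

/-- Pr[w_{i-1}] : probability of the prefix value w. -/
def prW (a₀ : A) (S : Finset (Vtx n ρ A)) (i : ℕ) (w : Pfx n A) : ℝ :=
  prS S (fun v => Wp a₀ i v = w)

/-- q_i(w_{i-1}) = Pr[X_i = 1 | W_{i-1} = w]. -/
def qiW (a₀ : A) (S : Finset (Vtx n ρ A)) (i : Fin n) (w : Pfx n A) : ℝ :=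
  prS (S.filter fun v => Wp a₀ (i : ℕ) v = w) (fun v => Xb v i = true)

/-- α_i = H(X_i | W_{i-1}). -/
def alphaE (a₀ : A) (S : Finset (Vtx n ρ A)) (i : Fin n) : ℝ :=
  cEnt S (fun v => Xb v i) (Wp a₀ (i : ℕ))

/-- β_i = H(Y_i | W_{i-1}, X_i). -/
def betaE (a₀ : A) (S : Finset (Vtx n ρ A)) (i : Fin n) : ℝ :=
  cEnt S (fun v => Yv a₀ v i) (fun v => (Wp a₀ (i : ℕ) v, Xb v i))

/-- β_i(w_{i-1}) = H(Y_i | X_i, W_{i-1} = w). -/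
def betaW (a₀ : A) (S : Finset (Vtx n ρ A)) (i : Fin n) (w : Pfx n A) : ℝ :=
  cEnt (S.filter fun v => Wp a₀ (i : ℕ) v = w) (fun v => Yv a₀ v i) (fun v => Xb v i)

/-- A good index: α_i ≥ H(q_i) − 2q_i·log|A| and β_i ≥ (1/2)ε₁q_i. -/
def GoodIdx (a₀ : A) (S : Finset (Vtx n ρ A)) (ε₁ : ℝ) (i : Fin n) : Prop :=
  alphaE a₀ S i ≥ binEnt (qi S i) - 2 * qi S i * Real.logb 2 (Fintype.card A) ∧
  betaE a₀ S i ≥ (1 / 2) * ε₁ * qi S i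

/-- Neighborhood relation of the i-th prefix graph (self-loops included): two prefixes are
neighbors iff wherever both choose a variable j < i they assign it the same label. -/
def PfxNbr (n : ℕ) (A : Type*) (i : ℕ) (w σ' : Pfx n A) : Prop :=
  ∀ j : Fin n, (j : ℕ) < i → w.1 j = true → σ'.1 j = true → w.2 j = σ'.2 j

/-- A good prefix. -/
def GoodPfx (a₀ : A) (S : Finset (Vtx n ρ A)) (ε₁ ε₂ ε₃ : ℝ) (i : Fin n) (w : Pfx n A) : Prop :=
  GoodIdx a₀ S ε₁ i ∧
  (∑ σ' : Pfx n A, if PfxNbr n A (i : ℕ) w σ' then prW a₀ S (i : ℕ) σ' * qiW a₀ S i σ' else 0)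
      ≥ (1 - ε₂) * qi S i ∧
  betaW a₀ S i w ≥ ε₃ * qiW a₀ S i w

/-- A vertex violating an internal 2CSP constraint (an isolated vertex). -/
def Violates (ψ : CSP n A) (v : Vtx n ρ A) : Prop :=
  ∃ i j, ∃ (hi : i ∈ v.1.1) (hj : j ∈ v.1.1),
    ψ.adj i j ∧ ¬ ψ.rel i j (v.2 ⟨i, hi⟩) (v.2 ⟨j, hj⟩)

/-- Adjacency in the product graph G_ψ: both endpoints are non-isolated, they agree on
common variables, and all cross 2CSP constraints are satisfied. -/
def PAdj (ψ : CSP n A) (u v : Vtx n ρ A) : Prop :=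
  ¬ Violates ψ u ∧ ¬ Violates ψ v ∧
  (∀ i, ∀ (hu : i ∈ u.1.1) (hv : i ∈ v.1.1), u.2 ⟨i, hu⟩ = v.2 ⟨i, hv⟩) ∧
  (∀ i j, ∀ (hu : i ∈ u.1.1) (hv : j ∈ v.1.1), ψ.adj i j → ψ.rel i j (u.2 ⟨i, hu⟩) (v.2 ⟨j, hv⟩))

/-- den(S) : the edge density of S in the product graph. -/
def den (ψ : CSP n A) (S : Finset (Vtx n ρ A)) : ℝ :=
  (((S ×ˢ S).filter fun p => PAdj ψ p.1 p.2).card : ℝ) / ((S.card : ℝ) ^ 2)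

/-- den(G_{i+1}) : weighted density of the prefix graph with cutoff i. -/
def pfxDen (a₀ : A) (S : Finset (Vtx n ρ A)) (i : ℕ) : ℝ :=
  ∑ w : Pfx n A, ∑ σ' : Pfx n A,
    if PfxNbr n A i w σ' then prW a₀ S i w * prW a₀ S i σ' else 0

/-- Number of (ordered) satisfied constraint pairs for assignment τ. -/
def nSat (ψ : CSP n A) (τ : Fin n → A) : ℕ :=
  ((univ ×ˢ univ : Finset (Fin n × Fin n)).filter fun p =>
    ψ.adj p.1 p.2 ∧ ψ.rel p.1 p.2 (τ p.1) (τ p.2)).card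

/-- Number of (ordered) constraint pairs. -/
def nEdg (ψ : CSP n A) : ℕ :=
  ((univ ×ˢ univ : Finset (Fin n × Fin n)).filter fun p => ψ.adj p.1 p.2).card

/-- The constraint graph is d-regular. -/
def Regular (ψ : CSP n A) (d : ℕ) : Prop :=
  ∀ i, ((univ : Finset (Fin n)).filter fun j => ψ.adj i j).card = d

/-- A typical prefix: (1−ε₅)ρ/n < q_i(w) < (1+ε₅)ρ/n. -/
def TypPfx (a₀ : A) (S : Finset (Vtx n ρ A)) (ε₅ : ℝ) (i : Fin n) (w : Pfx n A) : Prop :=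
  (1 - ε₅) * ((ρ : ℝ) / (n : ℝ)) < qiW a₀ S i w ∧ qiW a₀ S i w < (1 + ε₅) * ((ρ : ℝ) / (n : ℝ))

/-- A typical variable: typical prefixes have total probability at least 1−ε₅. -/
def TypVar (a₀ : A) (S : Finset (Vtx n ρ A)) (ε₅ : ℝ) (i : Fin n) : Prop :=
  (∑ w : Pfx n A, if TypPfx a₀ S ε₅ i w then prW a₀ S (i : ℕ) w else 0) ≥ 1 - ε₅

/-- I(u,v) : the number of tests between u and v (ordered pairs (i,j) forming a constraint
edge between typical variables, chosen with typical prefixes by u, v respectively). -/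
def Icnt (ψ : CSP n A) (a₀ : A) (S : Finset (Vtx n ρ A)) (ε₅ : ℝ) (u v : Vtx n ρ A) : ℕ :=
  ((univ ×ˢ univ : Finset (Fin n × Fin n)).filter fun p =>
    ψ.adj p.1 p.2 ∧ TypVar a₀ S ε₅ p.1 ∧ TypVar a₀ S ε₅ p.2 ∧
    Xb u p.1 = true ∧ Xb v p.2 = true ∧
    TypPfx a₀ S ε₅ p.1 (Wp a₀ (p.1 : ℕ) u) ∧ TypPfx a₀ S ε₅ p.2 (Wp a₀ (p.2 : ℕ) v)).card

/-- I^T(i,j) : the number of tests of the constraint (i,j) over pairs of S. -/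
def ITop (a₀ : A) (S : Finset (Vtx n ρ A)) (ε₅ : ℝ) (i j : Fin n) : ℕ :=
  ((S ×ˢ S).filter fun p =>
    Xb p.1 i = true ∧ Xb p.2 j = true ∧
    TypPfx a₀ S ε₅ i (Wp a₀ (i : ℕ) p.1) ∧ TypPfx a₀ S ε₅ j (Wp a₀ (j : ℕ) p.2)).card

/-- E_{u,v}[I(u,v)] for u,v independent uniform on S. -/
def EI (ψ : CSP n A) (a₀ : A) (S : Finset (Vtx n ρ A)) (ε₅ : ℝ) : ℝ :=
  (∑ u ∈ S, ∑ v ∈ S, (Icnt ψ a₀ S ε₅ u v : ℝ)) / ((S.card : ℝ) ^ 2)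

/-- E_{u,v}[I(u,v)²] for u,v independent uniform on S. -/
def EI2 (ψ : CSP n A) (a₀ : A) (S : Finset (Vtx n ρ A)) (ε₅ : ℝ) : ℝ :=
  (∑ u ∈ S, ∑ v ∈ S, (Icnt ψ a₀ S ε₅ u v : ℝ) ^ 2) / ((S.card : ℝ) ^ 2)

end

/-! ### Elementary inequalities -/

/-- Maclaurin-type bound for the `k`-th elementary symmetric sum of nonnegative weights:
`k! · e_k(w) ≤ (∑ w)^k`. -/
theorem factorial_mul_esymm_le {ι : Type*} (w : ι → ℝ) (hw : ∀ i, 0 ≤ w i) (s : Finset ι) :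
    ∀ k : ℕ, (k.factorial : ℝ) * ∑ T ∈ s.powersetCard k, ∏ i ∈ T, w i ≤ (∑ i ∈ s, w i) ^ k := by
  induction s using Finset.induction_on with
  | empty =>
    intro k
    cases k with
    | zero => simp
    | succ k => rw [Finset.powersetCard_eq_empty.2 (by simp)]; simp
  | insert a s ha ih =>
    intro k
    cases k with
    | zero => simp
    | succ k =>
      have hdisj : Disjoint (powersetCard (k + 1) s) ((powersetCard k s).image (insert a)) := by
        rw [Finset.disjoint_left]
        intro T hT hT'
        obtain ⟨T', -, rfl⟩ := Finset.mem_image.1 hT'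
        exact ha ((Finset.mem_powersetCard.1 hT).1 (Finset.mem_insert_self _ _))
      have hinj : Set.InjOn (insert a) (powersetCard k s : Set (Finset ι)) := by
        intro T hT T' hT' h
        have h1 : a ∉ T := fun h => ha ((Finset.mem_powersetCard.1 hT).1 h)
        have h2 : a ∉ T' := fun h => ha ((Finset.mem_powersetCard.1 hT').1 h)
        rw [← Finset.erase_insert h1, ← Finset.erase_insert h2, h]
      have himg : ∑ T ∈ (powersetCard k s).image (insert a), ∏ i ∈ T, w i
          = w a * ∑ T ∈ powersetCard k s, ∏ i ∈ T, w i := by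
        rw [Finset.sum_image hinj, Finset.mul_sum]
        refine Finset.sum_congr rfl fun T hT => ?_
        rw [Finset.prod_insert fun h => ha ((Finset.mem_powersetCard.1 hT).1 h)]
      rw [Finset.powersetCard_succ_insert ha, Finset.sum_union hdisj, himg,
        Finset.sum_insert ha]
      have h1 := ih (k + 1)
      have h2 := ih k
      set x := ∑ i ∈ s, w i
      have hx : 0 ≤ x := Finset.sum_nonneg fun i _ => hw i
      have hwa := hw a
      have hbin : ∀ m : ℕ, x ^ (m + 1) + (m + 1) * (w a * x ^ m) ≤ (w a + x) ^ (m + 1) := by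
        intro m
        induction m with
        | zero => simp [add_comm]
        | succ m ihm =>
          have h3 := mul_le_mul_of_nonneg_left ihm (add_nonneg hwa hx)
          have h4 : 0 ≤ (m + 1) * (w a * w a * x ^ m) := by positivity
          push_cast
          calc _ ≤ (w a + x) * (x ^ (m + 1) + (m + 1) * (w a * x ^ m)) := by
                ring_nf at h4 ⊢; linarith
            _ ≤ _ := h3.trans (le_of_eq (by ring))
      refine le_trans ?_ (hbin k)
      rw [mul_add]
      refine add_le_add h1 ?_
      rw [Nat.factorial_succ]
      push_cast
      have := mul_le_mul_of_nonneg_left h2 (mul_nonneg (by positivity : (0:ℝ) ≤ k + 1) hwa)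
      linarith

/-- Markov's inequality for counting. -/
theorem card_filter_mul_le {α : Type*} (S : Finset α) (f : α → ℝ) (hf : ∀ x ∈ S, 0 ≤ f x) (t : ℝ)
    (P : α → Prop) [DecidablePred P] (hP : ∀ x ∈ S, P x → t ≤ f x) :
    ((S.filter P).card : ℝ) * t ≤ ∑ x ∈ S, f x := by
  rw [← nsmul_eq_mul]
  refine (Finset.card_nsmul_le_sum _ f t fun x hx => ?_).trans
    (Finset.sum_le_sum_of_subset_of_nonneg (Finset.filter_subset P S) fun x hx _ => hf x hx)
  exact hP x (Finset.mem_filter.1 hx).1 (Finset.mem_filter.1 hx).2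

/-- If almost all of `S × Q` is adjacent then few `u ∈ S` miss more than half of `Q`. -/
theorem card_bad_le {α : Type*} (adj : α → α → Prop) (S Q : Finset α) (hQ : Q.Nonempty) (κ : ℝ)
    (hdeg : ∀ v ∈ Q, ((S.filter fun u => ¬ adj v u).card : ℝ) ≤ κ * S.card) :
    ((S.filter fun u => ¬ ((Q.card : ℝ) / 2 ≤ (Q.filter fun v => adj v u).card)).card : ℝ)
      ≤ 2 * κ * S.card := by
  have hQ0 : (0 : ℝ) < Q.card := by exact_mod_cast hQ.card_pos
  have h1 := card_filter_mul_le S (fun u => ((Q.filter fun v => ¬ adj v u).card : ℝ))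
    (fun _ _ => by positivity) ((Q.card : ℝ) / 2)
    (fun u => ¬ ((Q.card : ℝ) / 2 ≤ (Q.filter fun v => adj v u).card)) (by
      intro u _ hu
      have := Finset.card_filter_add_card_filter_not (s := Q) (fun v => adj v u)
      have : ((Q.filter fun v => adj v u).card : ℝ) + (Q.filter fun v => ¬ adj v u).card
        = Q.card := by exact_mod_cast this
      linarith)
  have h2 : ∑ u ∈ S, ((Q.filter fun v => ¬ adj v u).card : ℝ)
      = ∑ v ∈ Q, ((S.filter fun u => ¬ adj v u).card : ℝ) := by
    exact_mod_cast (Finset.sum_card_bipartiteAbove_eq_sum_card_bipartiteBelow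
      (s := S) (t := Q) fun u v => ¬ adj v u)
  have h3 : ∑ v ∈ Q, ((S.filter fun u => ¬ adj v u).card : ℝ) ≤ Q.card * (κ * S.card) := by
    rw [← nsmul_eq_mul]
    exact Finset.sum_le_card_nsmul _ _ _ hdeg
  rw [h2] at h1
  have := h1.trans h3
  refine le_of_mul_le_mul_left ?_ (half_pos hQ0)
  linarith

/-! ### Two completely joined families in a dense set -/

/-- The set of variables chosen by some vertex of `L`. -/
def cover {n ρ : ℕ} {A : Type*} (L : Finset (Vtx n ρ A)) : Finset (Fin n) :=
  L.biUnion fun u => u.1.1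

theorem mem_cover {n ρ : ℕ} {A : Type*} {L : Finset (Vtx n ρ A)} {i : Fin n} :
    i ∈ cover L ↔ ∃ u ∈ L, i ∈ u.1.1 := by
  simp [cover]

theorem sum_card_inter {n ρ : ℕ} {A : Type*} (S : Finset (Vtx n ρ A)) (D : Finset (Fin n)) :
    ∑ v ∈ S, ((v.1.1 ∩ D).card : ℝ) = ∑ i ∈ D, ((S.filter fun v => i ∈ v.1.1).card : ℝ) := by
  have := Finset.sum_card_bipartiteAbove_eq_sum_card_bipartiteBelow
      (s := S) (t := D) fun v i => i ∈ v.1.1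
  simp only [Finset.bipartiteAbove, Finset.bipartiteBelow] at this
  rw [← Nat.cast_sum, ← Nat.cast_sum, ← this]
  congr 1
  refine Finset.sum_congr rfl fun v _ => ?_
  congr 1
  ext i
  simp [and_comm]

/-- Density at least `1 - δ` means that at most `δ |S|²` ordered pairs are not adjacent. -/
theorem sum_nonadj_le {n ρ : ℕ} {A : Type*} [Fintype A] [DecidableEq A] (ψ : CSP n A)
    (S : Finset (Vtx n ρ A)) (hS : S.Nonempty) (δ : ℝ) (hden : 1 - δ ≤ den ψ S) :
    ∑ v ∈ S, ((S.filter fun u => ¬ PAdj ψ v u).card : ℝ) ≤ δ * (S.card : ℝ) ^ 2 := by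
  have hS0 : (0 : ℝ) < S.card := by exact_mod_cast hS.card_pos
  have h1 : (((S ×ˢ S).filter fun p => PAdj ψ p.1 p.2).card : ℝ)
      = ∑ v ∈ S, ((S.filter fun u => PAdj ψ v u).card : ℝ) := by
    simp only [Finset.card_filter, Finset.sum_product]
    push_cast
    rfl
  have h2 : ∀ v, ((S.filter fun u => PAdj ψ v u).card : ℝ)
      + (S.filter fun u => ¬ PAdj ψ v u).card = S.card := fun v => by
    exact_mod_cast Finset.card_filter_add_card_filter_not (s := S) (fun u => PAdj ψ v u)
  have h3 : ∑ v ∈ S, ((S.filter fun u => PAdj ψ v u).card : ℝ)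
      + ∑ v ∈ S, ((S.filter fun u => ¬ PAdj ψ v u).card : ℝ) = (S.card : ℝ) ^ 2 := by
    rw [← Finset.sum_add_distrib, Finset.sum_congr rfl fun v _ => h2 v]
    simp [sq]
  unfold den at hden
  rw [le_div_iff₀ (by positivity), h1] at hden
  linarith

/-- In a dense `S` there are a short list `L` and a large set `Q` of vertices, completely joined
to each other, such that, for some set `Ustar` of variables, every vertex of `Q` lives almost
entirely on `Ustar`, and `L` covers almost all of `Ustar`. -/
theorem exists_list {n ρ : ℕ} {A : Type*} [Fintype A] [DecidableEq A] (ψ : CSP n A)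
    (S : Finset (Vtx n ρ A)) (hS : S.Nonempty) (hρ : 0 < ρ) (hn : 0 < n) (ε κ : ℝ)
    (hε : 0 < ε) (hκ : 0 < κ) (hden : 1 - κ / 4 ≤ den ψ S) :
    ∃ (L Q : Finset (Vtx n ρ A)) (Ustar : Finset (Fin n)),
      (∀ v ∈ Q, ∀ u ∈ L, PAdj ψ v u) ∧
      (∀ v ∈ Q, ((v.1.1 \ Ustar).card : ℝ) ≤ 2 * ε * ρ) ∧
      (S.card : ℝ) ≤ 4 * 2 ^ L.card * Q.card ∧
      κ * ρ * L.card ≤ n ∧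
      ε * ((Ustar \ cover L).card : ℝ) ≤ 3 * κ * n := by
  have hS0 : (0 : ℝ) < S.card := by exact_mod_cast hS.card_pos
  have hρ0 : (0 : ℝ) < ρ := by exact_mod_cast hρ
  have hn0 : (0 : ℝ) < n := by exact_mod_cast hn
  -- the variables chosen by at least an `ερ/n` fraction of `S`
  set Us : Finset (Fin n) := univ.filter fun i =>
    ε * ρ * S.card ≤ n * ((S.filter fun v => i ∈ v.1.1).card : ℝ) with hUs
  have hlight : ∑ v ∈ S, ((v.1.1 \ Us).card : ℝ) ≤ ε * ρ * S.card := by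
    have h1 : ∀ v : Vtx n ρ A, v.1.1 \ Us = v.1.1 ∩ Usᶜ := fun v => by
      rw [Finset.sdiff_eq_inter_compl]
    simp only [h1]
    rw [sum_card_inter]
    have h2 : ∀ i ∈ Usᶜ, ((S.filter fun v => i ∈ v.1.1).card : ℝ) ≤ ε * ρ * S.card / n := by
      intro i hi
      rw [le_div_iff₀ hn0]
      have : ¬ (ε * ρ * S.card ≤ n * ((S.filter fun v => i ∈ v.1.1).card : ℝ)) := by
        simpa [hUs] using hi
      linarith
    refine (Finset.sum_le_card_nsmul _ _ _ h2).trans ?_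
    rw [nsmul_eq_mul]
    have h3 : ((Usᶜ).card : ℝ) ≤ n := by
      exact_mod_cast (Finset.card_le_univ Usᶜ).trans (by simp)
    calc ((Usᶜ).card : ℝ) * (ε * ρ * S.card / n) ≤ n * (ε * ρ * S.card / n) := by gcongr
      _ = _ := by field_simp
  have hA : ((S.filter fun v => ¬ ((v.1.1 \ Us).card : ℝ) ≤ 2 * ε * ρ).card : ℝ) ≤ S.card / 2 := by
    have := (card_filter_mul_le S (fun v => ((v.1.1 \ Us).card : ℝ)) (fun _ _ => by positivity)
      (2 * ε * ρ) (fun v => ¬ ((v.1.1 \ Us).card : ℝ) ≤ 2 * ε * ρ)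
      (fun v _ h => (not_le.1 h).le)).trans hlight
    have hp : 0 < 2 * ε * ρ := by positivity
    refine le_of_mul_le_mul_right ?_ hp
    linarith
  have hB : ((S.filter fun v => ¬ ((S.filter fun u => ¬ PAdj ψ v u).card : ℝ) ≤ κ * S.card).card : ℝ)
      ≤ S.card / 4 := by
    have := (card_filter_mul_le S (fun v => ((S.filter fun u => ¬ PAdj ψ v u).card : ℝ))
      (fun _ _ => by positivity) (κ * S.card)
      (fun v => ¬ ((S.filter fun u => ¬ PAdj ψ v u).card : ℝ) ≤ κ * S.card)
      (fun v _ h => (not_le.1 h).le)).trans (sum_nonadj_le ψ S hS _ hden)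
    have hp : 0 < κ * S.card := by positivity
    refine le_of_mul_le_mul_right ?_ hp
    linarith
  set R : Finset (Vtx n ρ A) := S.filter fun v => ((v.1.1 \ Us).card : ℝ) ≤ 2 * ε * ρ ∧
    ((S.filter fun u => ¬ PAdj ψ v u).card : ℝ) ≤ κ * S.card with hR
  have hRcard : (S.card : ℝ) ≤ 4 * R.card := by
    have hsub : S ⊆ R ∪ ((S.filter fun v => ¬ ((v.1.1 \ Us).card : ℝ) ≤ 2 * ε * ρ) ∪
        (S.filter fun v => ¬ ((S.filter fun u => ¬ PAdj ψ v u).card : ℝ) ≤ κ * S.card)) := by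
      intro v hv
      simp only [Finset.mem_union, hR, Finset.mem_filter]
      tauto
    have h1 := (Finset.card_le_card hsub).trans
      ((Finset.card_union_le _ _).trans (Nat.add_le_add_left (Finset.card_union_le _ _) _))
    have h2 : (S.card : ℝ) ≤ R.card +
      ((S.filter fun v => ¬ ((v.1.1 \ Us).card : ℝ) ≤ 2 * ε * ρ).card +
        (S.filter fun v => ¬ ((S.filter fun u => ¬ PAdj ψ v u).card : ℝ) ≤ κ * S.card).card) := by
      exact_mod_cast h1
    linarith
  have hR0 : (0 : ℝ) < R.card := by linarith
  -- a longest list whose common neighbourhood has lost at most a factor `2` per member, and which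
  -- covers on average at least `κρ` variables of `Us` per member; a longest one cannot be extended
  -- by any `u` that is adjacent to half of `Q` and covers more than `κρ` new variables
  obtain ⟨L, hLF, hLmax⟩ := Finset.exists_max_image
    (S.powerset.filter fun L => (R.card : ℝ) ≤ 2 ^ L.card *
        (R.filter fun v => ∀ u ∈ L, PAdj ψ v u).card ∧
      κ * ρ * L.card ≤ (Us ∩ cover L).card) Finset.card
    ⟨∅, by simp⟩
  obtain ⟨hLS, hLR, hLU⟩ := Finset.mem_filter.1 hLF
  rw [Finset.mem_powerset] at hLS
  set Q := R.filter fun v => ∀ u ∈ L, PAdj ψ v u with hQ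
  have hQ0 : Q.Nonempty := by
    rw [Finset.nonempty_iff_ne_empty]
    intro h
    rw [h] at hLR
    simp at hLR
    rw [hLR] at hR0
    simp at hR0
  refine ⟨L, Q, Us, fun v hv => (Finset.mem_filter.1 hv).2, fun v hv => ?_, ?_, ?_, ?_⟩
  · exact (Finset.mem_filter.1 (Finset.mem_filter.1 hv).1).2.1
  · linarith
  · refine hLU.trans ?_
    exact_mod_cast (Finset.card_le_univ _).trans (by simp)
  set D := Us \ cover L with hD
  have hgood : ∀ u ∈ S, (Q.card : ℝ) / 2 ≤ (Q.filter fun v => PAdj ψ v u).card →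
      ((u.1.1 ∩ D).card : ℝ) ≤ κ * ρ := by
    intro u hu hu2
    by_contra! hcon
    have hne : (u.1.1 ∩ D).Nonempty := by
      rw [← Finset.card_pos]
      have : (0 : ℝ) < (u.1.1 ∩ D).card := lt_trans (by positivity) hcon
      exact_mod_cast this
    have huL : u ∉ L := by
      intro huL
      obtain ⟨i, hi⟩ := hne
      rw [Finset.mem_inter, hD, Finset.mem_sdiff, mem_cover] at hi
      exact hi.2.2 ⟨u, huL, hi.1⟩
    have hmem : insert u L ∈ S.powerset.filter fun L => (R.card : ℝ) ≤ 2 ^ L.card *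
        (R.filter fun v => ∀ u ∈ L, PAdj ψ v u).card ∧
        κ * ρ * L.card ≤ (Us ∩ cover L).card := by
      rw [Finset.mem_filter, Finset.mem_powerset]
      refine ⟨Finset.insert_subset hu hLS, ?_, ?_⟩
      · have : (R.filter fun v => ∀ u' ∈ insert u L, PAdj ψ v u')
            = Q.filter fun v => PAdj ψ v u := by
          ext v
          simp only [hQ, Finset.mem_filter, Finset.forall_mem_insert]
          tauto
        rw [this, Finset.card_insert_of_notMem huL, pow_succ]
        have h5 : (0 : ℝ) < 2 ^ L.card := by positivity
        have h6 := mul_le_mul_of_nonneg_left hu2 h5.le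
        linarith
      · have hsub : (Us ∩ cover L) ∪ (u.1.1 ∩ D) ⊆ Us ∩ cover (insert u L) := by
          intro i
          simp only [hD, Finset.mem_union, Finset.mem_inter, Finset.mem_sdiff, mem_cover,
            Finset.exists_mem_insert]
          tauto
        have hdisj : Disjoint (Us ∩ cover L) (u.1.1 ∩ D) := by
          rw [Finset.disjoint_left]
          intro i
          simp only [hD, Finset.mem_inter, Finset.mem_sdiff]
          tauto
        have h7 := Finset.card_le_card hsub
        rw [Finset.card_union_of_disjoint hdisj] at h7
        have h8 : ((Us ∩ cover L).card : ℝ) + (u.1.1 ∩ D).card ≤ (Us ∩ cover (insert u L)).card := by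
          exact_mod_cast h7
        rw [Finset.card_insert_of_notMem huL]
        push_cast
        linarith
    have := hLmax _ hmem
    rw [Finset.card_insert_of_notMem huL] at this
    omega
  have hbad := card_bad_le (fun v u => PAdj ψ v u) S Q hQ0 κ fun v hv =>
    (Finset.mem_filter.1 (Finset.mem_filter.1 hv).1).2.2
  have hsum : ∑ u ∈ S, ((u.1.1 ∩ D).card : ℝ) ≤ 3 * κ * ρ * S.card := by
    rw [← Finset.sum_filter_add_sum_filter_not S
      (fun u => (Q.card : ℝ) / 2 ≤ (Q.filter fun v => PAdj ψ v u).card)]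
    have h1 : ∑ u ∈ S.filter (fun u => (Q.card : ℝ) / 2 ≤ (Q.filter fun v => PAdj ψ v u).card),
        ((u.1.1 ∩ D).card : ℝ) ≤ S.card * (κ * ρ) := by
      refine (Finset.sum_le_card_nsmul _ _ _ fun u hu =>
        hgood u (Finset.mem_filter.1 hu).1 (Finset.mem_filter.1 hu).2).trans ?_
      rw [nsmul_eq_mul]
      gcongr
      exact Finset.filter_subset _ _
    have h2 := Finset.sum_le_card_nsmul
      (S.filter fun u => ¬ (Q.card : ℝ) / 2 ≤ (Q.filter fun v => PAdj ψ v u).card)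
      (fun u => ((u.1.1 ∩ D).card : ℝ)) ρ (fun u _ => by
        have : (u.1.1 ∩ D).card ≤ ρ :=
          (Finset.card_le_card Finset.inter_subset_left).trans u.1.2.le
        exact_mod_cast this)
    rw [nsmul_eq_mul] at h2
    have h3 := mul_le_mul_of_nonneg_right hbad hρ0.le
    linarith
  rw [sum_card_inter] at hsum
  have hlow : (D.card : ℝ) * (ε * ρ * S.card / n) ≤ ∑ i ∈ D, ((S.filter fun v => i ∈ v.1.1).card : ℝ) := by
    rw [← nsmul_eq_mul]
    refine Finset.card_nsmul_le_sum _ _ _ fun i hi => ?_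
    rw [div_le_iff₀ hn0]
    have := (Finset.mem_filter.1 (Finset.mem_sdiff.1 hi).1).2
    linarith
  have h9 := hlow.trans hsum
  rw [mul_div_assoc', div_le_iff₀ hn0] at h9
  have hp : 0 < ρ * (S.card : ℝ) := by positivity
  refine le_of_mul_le_mul_right ?_ hp
  linarith

/-! ### Counting the vertices labelled by a partial assignment -/

/-- Once the labels on `U` are prescribed by `τ`, at most `|A|^|T \ U|` vertices have underlying
set `T`. -/
theorem card_fiber_le {n ρ : ℕ} {A : Type*} [Fintype A] [DecidableEq A]
    (Q : Finset (Vtx n ρ A)) (U : Finset (Fin n)) (τ : Fin n → A)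
    (hτ : ∀ v ∈ Q, ∀ i, ∀ h : i ∈ v.1.1, i ∈ U → v.2 ⟨i, h⟩ = τ i) (T : Finset (Fin n)) :
    (Q.filter fun v => v.1.1 = T).card ≤ Fintype.card A ^ (T \ U).card := by
  have h1 : (Q.filter fun v => v.1.1 = T).card
      ≤ (univ : Finset (↥(T \ U) → A)).card := by
    refine Finset.card_le_card_of_injOn (fun v i => Yv (τ i) v i) (fun _ _ => Finset.mem_univ _) ?_
    rintro ⟨⟨T1, h1⟩, y1⟩ hv ⟨⟨T2, h2⟩, y2⟩ hv' heq
    obtain ⟨hQ1, rfl⟩ := Finset.mem_filter.1 (Finset.mem_coe.1 hv)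
    obtain ⟨hQ2, hT2⟩ := Finset.mem_filter.1 (Finset.mem_coe.1 hv')
    simp only at hT2
    subst hT2
    congr 1
    funext i
    by_cases hi : i.1 ∈ U
    · exact (hτ _ hQ1 i.1 i.2 hi).trans (hτ _ hQ2 i.1 i.2 hi).symm
    · have := congrFun heq ⟨i.1, Finset.mem_sdiff.2 ⟨i.2, hi⟩⟩
      simpa [Yv] using this
  rwa [Finset.card_univ, Fintype.card_fun, Fintype.card_coe] at h1

/-- A family `Q` of vertices whose labels on `U` are prescribed by `τ`, and whose sets lie on
`Ustar` up to `t` elements, is small unless `U ∩ cover Q` is almost everything: each set `T`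
is charged the weight `∏ i ∈ T, w i` with `w i = 1/2` outside `Ustar ∩ cover Q`, and with an extra
factor `|A|` on `Ustar \ U`, where labels are free. -/
theorem factorial_mul_card_le {n ρ : ℕ} {A : Type*} [Fintype A] [DecidableEq A]
    (hA : 1 ≤ Fintype.card A)
    (Q : Finset (Vtx n ρ A)) (U Us : Finset (Fin n)) (τ : Fin n → A) (t : ℝ)
    (hτ : ∀ v ∈ Q, ∀ i, ∀ h : i ∈ v.1.1, i ∈ U → v.2 ⟨i, h⟩ = τ i)
    (hQ : ∀ v ∈ Q, ((v.1.1 \ Us).card : ℝ) ≤ t) :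
    (ρ.factorial : ℝ) * Q.card ≤ (2 * (Fintype.card A : ℝ)) ^ t *
      ((n : ℝ) / 2 + ((U ∩ cover Q).card : ℝ) / 2 + Fintype.card A * ((Us \ U).card : ℝ)) ^ ρ := by
  set a : ℝ := (Fintype.card A : ℝ) with ha
  have ha1 : 1 ≤ a := by rw [ha]; exact_mod_cast hA
  set D := Us \ U with hD
  set Ws := Us ∩ cover Q with hWs
  set w : Fin n → ℝ := fun i => (if i ∈ D then a else 1) * (if i ∈ Ws then 1 else 1 / 2) with hw
  have hw0 : ∀ i, 0 ≤ w i := fun i => by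
    simp only [hw]; split_ifs <;> positivity
  have hprod : ∀ T : Finset (Fin n), ∏ i ∈ T, w i = a ^ (T ∩ D).card * (1 / 2) ^ (T \ Ws).card := by
    intro T
    simp only [hw, Finset.prod_mul_distrib]
    rw [Finset.prod_ite, Finset.prod_ite]
    simp [Finset.filter_mem_eq_inter, Finset.filter_notMem_eq_sdiff]
  have hfib : ∀ T ∈ (univ : Finset (Fin n)).powersetCard ρ,
      ((Q.filter fun v => v.1.1 = T).card : ℝ) ≤ (2 * a) ^ t * ∏ i ∈ T, w i := by
    intro T _
    rcases (Q.filter fun v => v.1.1 = T).eq_empty_or_nonempty with h | ⟨v, hv⟩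
    · rw [h]
      have := Finset.prod_nonneg fun i (_ : i ∈ T) => hw0 i
      simp only [Finset.card_empty, Nat.cast_zero]
      positivity
    · obtain ⟨hvQ, hvT⟩ := Finset.mem_filter.1 hv
      have hcov : T ⊆ cover Q := fun i hi => mem_cover.2 ⟨v, hvQ, hvT ▸ hi⟩
      have hsd : T \ Ws = T \ Us := by
        ext i
        simp only [hWs, Finset.mem_sdiff, Finset.mem_inter]
        have := @hcov i
        tauto
      have hsub : T \ U ⊆ (T ∩ D) ∪ (T \ Us) := by
        intro i
        simp only [hD, Finset.mem_sdiff, Finset.mem_inter, Finset.mem_union]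
        tauto
      have hc := (Finset.card_le_card hsub).trans (Finset.card_union_le _ _)
      have ht := hQ v hvQ
      rw [hvT] at ht
      have h1 : ((Q.filter fun v => v.1.1 = T).card : ℝ) ≤ a ^ (T \ U).card := by
        rw [ha]; exact_mod_cast card_fiber_le Q U τ hτ T
      have h2 : a ^ (T \ U).card ≤ a ^ (T ∩ D).card * a ^ (T \ Us).card := by
        rw [← pow_add]
        exact pow_le_pow_right₀ ha1 hc
      have h3 : (2 * a) ^ (T \ Us).card ≤ (2 * a) ^ t := by
        rw [← Real.rpow_natCast]
        exact Real.rpow_le_rpow_of_exponent_le (by linarith) ht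
      rw [hprod, hsd]
      calc ((Q.filter fun v => v.1.1 = T).card : ℝ)
          ≤ a ^ (T ∩ D).card * a ^ (T \ Us).card := h1.trans h2
        _ = (2 * a) ^ (T \ Us).card * (a ^ (T ∩ D).card * (1 / 2) ^ (T \ Us).card) := by
            rw [mul_pow, one_div, inv_pow]; field_simp
        _ ≤ _ := by gcongr
  have hcard : (Q.card : ℝ) = ∑ T ∈ (univ : Finset (Fin n)).powersetCard ρ,
      ((Q.filter fun v => v.1.1 = T).card : ℝ) := by
    exact_mod_cast Finset.card_eq_sum_card_fiberwise (f := fun v : Vtx n ρ A => v.1.1)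
      (s := Q) (t := (univ : Finset (Fin n)).powersetCard ρ) fun v _ => by
        simpa using v.1.2
  have hsumw : ∑ i, w i ≤ (n : ℝ) / 2 + ((U ∩ cover Q).card : ℝ) / 2 + a * (D.card : ℝ) := by
    have hpt : ∀ i, w i ≤ 1 / 2 + (if i ∈ U ∩ cover Q then 1 / 2 else 0)
        + (if i ∈ D then a else 0) := by
      intro i
      simp only [hw, hD, hWs, Finset.mem_sdiff, Finset.mem_inter]
      by_cases h1 : i ∈ U <;> by_cases h2 : i ∈ Us <;> by_cases h3 : i ∈ cover Q <;>
        simp [h1, h2, h3] <;> linarith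
    refine (Finset.sum_le_sum fun i _ => hpt i).trans (le_of_eq ?_)
    rw [Finset.sum_add_distrib, Finset.sum_add_distrib, Finset.sum_ite_mem, Finset.sum_ite_mem]
    simp only [Finset.univ_inter, Finset.sum_const, Finset.card_univ, Fintype.card_fin,
      nsmul_eq_mul]
    ring
  calc (ρ.factorial : ℝ) * Q.card
      ≤ ρ.factorial * ∑ T ∈ (univ : Finset (Fin n)).powersetCard ρ, (2 * a) ^ t * ∏ i ∈ T, w i := by
        rw [hcard]
        exact mul_le_mul_of_nonneg_left (Finset.sum_le_sum hfib) (by positivity)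
    _ = (2 * a) ^ t * (ρ.factorial *
          ∑ T ∈ (univ : Finset (Fin n)).powersetCard ρ, ∏ i ∈ T, w i) := by
        rw [← Finset.mul_sum]; ring
    _ ≤ (2 * a) ^ t * (∑ i, w i) ^ ρ :=
        mul_le_mul_of_nonneg_left (factorial_mul_esymm_le w hw0 univ ρ) (by positivity)
    _ ≤ _ := by
        have := Finset.sum_nonneg fun i (_ : i ∈ (univ : Finset (Fin n))) => hw0 i
        gcongr

/-! ### The assignment read off from the two families -/

/-- If `Q` and `L` are completely joined, the labels used by `L` define an assignment with which
every vertex of `Q` agrees on `cover L`. A constraint edge `(i, j)` inside `cover L ∩ cover Q` is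
satisfied: pick `v ∈ Q` choosing `i` and the `u ∈ L` that defined `τ j`, and use that `v`, `u` are
adjacent. At most `2d` ordered constraint pairs are lost per variable outside
`cover L ∩ cover Q`. -/
theorem exists_assignment {n ρ d : ℕ} {A : Type*} [Fintype A] [DecidableEq A] [Nonempty A]
    (ψ : CSP n A) (hreg : Regular ψ d) (L Q : Finset (Vtx n ρ A))
    (hadj : ∀ v ∈ Q, ∀ u ∈ L, PAdj ψ v u) :
    ∃ τ : Fin n → A,
      (∀ v ∈ Q, ∀ i, ∀ h : i ∈ v.1.1, i ∈ cover L → v.2 ⟨i, h⟩ = τ i) ∧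
      (nEdg ψ : ℝ) = n * d ∧
      (nEdg ψ : ℝ) ≤ nSat ψ τ + 2 * d * (n - ((cover L ∩ cover Q).card : ℝ)) := by
  have hch : ∀ i, ∃ b : A, i ∈ cover L →
      ∃ u ∈ L, ∃ h : i ∈ u.1.1, u.2 ⟨i, h⟩ = b := by
    intro i
    by_cases hi : i ∈ cover L
    · obtain ⟨u, hu, hiu⟩ := mem_cover.1 hi
      exact ⟨u.2 ⟨i, hiu⟩, fun _ => ⟨u, hu, hiu, rfl⟩⟩
    · exact ⟨Classical.arbitrary A, fun h => absurd h hi⟩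
  choose τ hτ using hch
  have hagree : ∀ v ∈ Q, ∀ i, ∀ h : i ∈ v.1.1, i ∈ cover L → v.2 ⟨i, h⟩ = τ i := by
    intro v hv i h hi
    obtain ⟨u, hu, hiu, hb⟩ := hτ i hi
    rw [← hb]
    exact (hadj v hv u hu).2.2.1 i h hiu
  have hE : nEdg ψ = n * d := by
    unfold nEdg
    rw [Finset.card_filter, Finset.sum_product]
    simp only [← Finset.card_filter]
    rw [Finset.sum_congr rfl fun i _ => hreg i]
    simp
  refine ⟨τ, hagree, by exact_mod_cast hE, ?_⟩
  set W := cover L ∩ cover Q with hW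
  have hrow : ∀ i, ((univ ×ˢ univ : Finset (Fin n × Fin n)).filter
      fun p => ψ.adj p.1 p.2 ∧ p.1 = i).card = d := by
    intro i
    rw [Finset.card_filter, Finset.sum_product, Finset.sum_eq_single i]
    · simp only [and_true, ← Finset.card_filter]; exact hreg i
    · intro j _ hj; simp [hj]
    · simp
  have hcol : ∀ i, ((univ ×ˢ univ : Finset (Fin n × Fin n)).filter
      fun p => ψ.adj p.1 p.2 ∧ p.2 = i).card = d := by
    intro i
    rw [← hrow i]
    refine Finset.card_bij (fun p _ => (p.2, p.1)) ?_ ?_ ?_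
    · rintro ⟨x, y⟩ h
      simp only [Finset.mem_filter, Finset.mem_product, Finset.mem_univ, true_and] at h ⊢
      exact ⟨ψ.symm h.1, h.2⟩
    · rintro ⟨x, y⟩ _ ⟨x', y'⟩ _ h
      simp only [Prod.mk.injEq] at h
      simp [h.1, h.2]
    · rintro ⟨x, y⟩ h
      simp only [Finset.mem_filter, Finset.mem_product, Finset.mem_univ, true_and] at h
      exact ⟨(y, x), by simpa using ⟨ψ.symm h.1, h.2⟩, rfl⟩
  have hsub : ((univ ×ˢ univ : Finset (Fin n × Fin n)).filter fun p => ψ.adj p.1 p.2) ⊆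
      ((univ ×ˢ univ : Finset (Fin n × Fin n)).filter fun p =>
        ψ.adj p.1 p.2 ∧ ψ.rel p.1 p.2 (τ p.1) (τ p.2)) ∪
      ((Wᶜ.biUnion fun i => (univ ×ˢ univ : Finset (Fin n × Fin n)).filter
          fun p => ψ.adj p.1 p.2 ∧ p.1 = i) ∪
        (Wᶜ.biUnion fun i => (univ ×ˢ univ : Finset (Fin n × Fin n)).filter
          fun p => ψ.adj p.1 p.2 ∧ p.2 = i)) := by
    rintro ⟨i, j⟩ h
    simp only [Finset.mem_filter, Finset.mem_product, Finset.mem_univ, true_and] at h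
    simp only [Finset.mem_union, Finset.mem_biUnion, Finset.mem_filter, Finset.mem_product,
      Finset.mem_univ, true_and, Finset.mem_compl]
    by_cases hi : i ∈ W
    · by_cases hj : j ∈ W
      · left
        refine ⟨h, ?_⟩
        rw [hW, Finset.mem_inter] at hi hj
        obtain ⟨v, hv, hiv⟩ := mem_cover.1 hi.2
        obtain ⟨u, hu, hju, hb⟩ := hτ j hj.1
        rw [← hb, ← hagree v hv i hiv hi.1]
        exact (hadj v hv u hu).2.2.2 i j hiv hju h
      · exact Or.inr (Or.inr ⟨j, hj, h, rfl⟩)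
    · exact Or.inr (Or.inl ⟨i, hi, h, rfl⟩)
  have h1 := (Finset.card_le_card hsub).trans
    ((Finset.card_union_le _ _).trans (Nat.add_le_add_left (Finset.card_union_le _ _) _))
  have h2 := Finset.card_biUnion_le_card_mul Wᶜ (fun i => (univ ×ˢ univ : Finset (Fin n × Fin n)).filter
          fun p => ψ.adj p.1 p.2 ∧ p.1 = i) d fun i _ => (hrow i).le
  have h3 := Finset.card_biUnion_le_card_mul Wᶜ (fun i => (univ ×ˢ univ : Finset (Fin n × Fin n)).filter
          fun p => ψ.adj p.1 p.2 ∧ p.2 = i) d fun i _ => (hcol i).le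
  have h4 : nEdg ψ ≤ nSat ψ τ + (Wᶜ.card * d + Wᶜ.card * d) :=
    h1.trans (Nat.add_le_add_left (Nat.add_le_add h2 h3) _)
  have h5 : (Wᶜ.card : ℝ) = n - W.card := by
    rw [Finset.card_compl, Fintype.card_fin,
      Nat.cast_sub ((Finset.card_le_univ W).trans (by simp))]
  have h6 : (nEdg ψ : ℝ) ≤ nSat ψ τ + (Wᶜ.card * d + Wᶜ.card * d) := by exact_mod_cast h4
  rw [h5] at h6
  linarith

/-! ### Asymptotics of `ρ` and of the size of `S` -/

/-- The three comparisons used below: `√n ≤ ρ`, `n = o(ρ²)` (thanks to the factor `log log n`) and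
`ρ = o(n)`, together with `ρ → ∞`. -/
theorem rho_asymptotics (c : ℝ) (hc : 0 < c) :
    ∃ n₀ : ℕ, ∀ n ≥ n₀, Real.sqrt n ≤ rho n ∧ (n : ℝ) ≤ c * (rho n : ℝ) ^ 2 ∧
      (rho n : ℝ) ≤ c * n ∧ 1 ≤ c * rho n := by
  have hlog2 : Filter.Tendsto (fun n : ℕ => Real.logb 2 (n : ℝ)) Filter.atTop Filter.atTop :=
    (Real.tendsto_logb_atTop (by norm_num)).comp tendsto_natCast_atTop_atTop
  have hll : Filter.Tendsto (fun n : ℕ => Real.logb 2 (Real.logb 2 (n : ℝ)))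
      Filter.atTop Filter.atTop := (Real.tendsto_logb_atTop (by norm_num)).comp hlog2
  have hsqrt : Filter.Tendsto (fun n : ℕ => Real.sqrt (n : ℝ)) Filter.atTop Filter.atTop :=
    Real.tendsto_sqrt_atTop.comp tendsto_natCast_atTop_atTop
  -- `log n` is negligible against `√n`, and `log log n ≤ 4 log n`
  have hsmall : ∀ᶠ n : ℕ in Filter.atTop, Real.log n ≤ c / 8 * Real.sqrt n := by
    have h := (isLittleO_log_rpow_atTop (r := 1 / 2) (by norm_num)).bound
      (show (0 : ℝ) < c / 8 by positivity)
    filter_upwards [tendsto_natCast_atTop_atTop.eventually h] with n hn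
    rw [← Real.sqrt_eq_rpow, Real.norm_eq_abs, Real.norm_eq_abs,
      abs_of_nonneg (Real.sqrt_nonneg _)] at hn
    exact (le_abs_self _).trans hn
  have hev : ∀ᶠ n : ℕ in Filter.atTop, Real.sqrt n ≤ rho n ∧ (n : ℝ) ≤ c * (rho n : ℝ) ^ 2 ∧
      (rho n : ℝ) ≤ c * n ∧ 1 ≤ c * rho n := by
    filter_upwards [hll.eventually_ge_atTop 1, hll.eventually_ge_atTop (1 / c), hsmall,
      hsqrt.eventually_ge_atTop (2 / c), hsqrt.eventually_ge_atTop 1,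
      hlog2.eventually_ge_atTop 1] with n h1 h2 h3 h4 h5 h6
    set x := Real.logb 2 (Real.logb 2 (n : ℝ)) with hx
    set r := Real.sqrt n with hr
    have hrr : r * r = n := Real.mul_self_sqrt (Nat.cast_nonneg n)
    have hlow : r * x ≤ rho n := Nat.le_ceil _
    have hupp : (rho n : ℝ) < r * x + 1 := Nat.ceil_lt_add_one (by positivity)
    have hl2 : (1 / 2 : ℝ) < Real.log 2 := by linarith [Real.log_two_gt_d9]
    have hlogb : ∀ y : ℝ, 0 ≤ y → y / Real.log 2 ≤ 2 * y := by
      intro y hy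
      rw [div_le_iff₀ (by linarith)]
      nlinarith
    have hlogn : 0 ≤ Real.log n := Real.log_natCast_nonneg n
    have hx4 : x ≤ 4 * Real.log n := by
      have e1 : Real.logb 2 (n : ℝ) ≤ 2 * Real.log n := hlogb _ hlogn
      have e2 : x ≤ 2 * Real.log (Real.logb 2 n) := hlogb _ (Real.log_nonneg h6)
      have e3 : Real.log (Real.logb 2 n) ≤ Real.logb 2 n := Real.log_le_self (by linarith)
      linarith
    have hrρ : r ≤ rho n := le_trans (by nlinarith) hlow
    rw [div_le_iff₀ hc] at h2 h4
    refine ⟨hrρ, ?_, ?_, ?_⟩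
    · have e1 : (r * x) ^ 2 ≤ (rho n : ℝ) ^ 2 := by gcongr
      have e2 : 1 ≤ c * x ^ 2 := by nlinarith
      calc (n : ℝ) = r * r * 1 := by rw [hrr, mul_one]
        _ ≤ r * r * (c * x ^ 2) := by gcongr
        _ = c * (r * x) ^ 2 := by ring
        _ ≤ _ := by gcongr
    · have e1 : r * x ≤ r * (c / 2 * r) := by
        refine mul_le_mul_of_nonneg_left ?_ (by linarith)
        linarith
      have e2 : 1 ≤ c / 2 * n := by rw [← hrr]; nlinarith
      have e3 : r * (c / 2 * r) = c / 2 * n := by rw [← hrr]; ring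
      linarith
    · have := mul_le_mul_of_nonneg_left hrρ hc.le
      linarith
  exact Filter.eventually_atTop.1 hev

theorem sub_pow_le_factorial_mul_choose (n ρ : ℕ) (h : ρ ≤ n) :
    ((n : ℝ) - ρ) ^ ρ ≤ ρ.factorial * (n.choose ρ : ℝ) := by
  have h1 := n.pow_sub_le_descFactorial ρ
  rw [Nat.descFactorial_eq_factorial_mul_choose] at h1
  have h2 : ((n + 1 - ρ : ℕ) : ℝ) ^ ρ ≤ ρ.factorial * (n.choose ρ : ℝ) := by exact_mod_cast h1
  refine le_trans ?_ h2
  have h3 : (n : ℝ) - ρ ≤ ((n + 1 - ρ : ℕ) : ℝ) := by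
    rw [Nat.cast_sub (by omega)]; push_cast; linarith
  have h4 : (ρ : ℝ) ≤ n := by exact_mod_cast h
  gcongr

/-- Since `log log N ≥ (log n) / 2` and `log N ≤ 2ρ log n`, the factor `N^(-ε₀ / log log N)` is
at least `2^(-4 ε₀ ρ)`; the rounding costs at most a factor `2`. -/
theorem kprime_lower (n a : ℕ) (ε₀ : ℝ) (hε : 0 < ε₀) (hε' : ε₀ ≤ 1 / 8) (ha : 1 ≤ a)
    (han : a ≤ n) (hn : 2 ≤ n) (hρ : 2 ≤ rho n) (hρn : 3 * rho n ≤ n)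
    (hsq : Real.sqrt n ≤ rho n) :
    (n.choose (rho n) : ℝ) * (2 : ℝ) ^ (-(4 * ε₀ * rho n)) ≤
      2 * (⌊kprime n a ε₀⌋₊ : ℝ) := by
  set ρ := rho n with hρdef
  have hn2 : (2 : ℝ) ≤ n := by exact_mod_cast hn
  have hρ2 : (2 : ℝ) ≤ ρ := by exact_mod_cast hρ
  have hC : (2 : ℝ) ^ ρ ≤ n.choose ρ := by
    have h1 := sub_pow_le_factorial_mul_choose n ρ (by omega)
    have h2 : (2 * (ρ : ℝ)) ^ ρ ≤ ((n : ℝ) - ρ) ^ ρ := by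
      have : (3 * ρ : ℝ) ≤ n := by exact_mod_cast hρn
      gcongr
      linarith
    have h3 : (ρ.factorial : ℝ) ≤ (ρ : ℝ) ^ ρ := by exact_mod_cast Nat.factorial_le_pow ρ
    have h4 : (0 : ℝ) < ρ.factorial := by exact_mod_cast Nat.factorial_pos ρ
    refine le_of_mul_le_mul_left ?_ h4
    rw [mul_pow] at h2
    have h5 := mul_le_mul_of_nonneg_left h3 (by positivity : (0 : ℝ) ≤ 2 ^ ρ)
    linarith
  have hC0 : (0 : ℝ) < n.choose ρ := lt_of_lt_of_le (by positivity) hC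
  have hN : (n.choose ρ : ℝ) ≤ NN n a := by
    have : n.choose ρ ≤ NN n a := Nat.le_mul_of_pos_right _ (Nat.pow_pos ha)
    exact_mod_cast this
  have hN0 : (0 : ℝ) < NN n a := hC0.trans_le hN
  have hNupp : (NN n a : ℝ) ≤ (n : ℝ) ^ (2 * ρ) := by
    have : NN n a ≤ n ^ (2 * ρ) := by
      rw [two_mul, pow_add]
      exact Nat.mul_le_mul (Nat.choose_le_pow n ρ) (Nat.pow_le_pow_left han ρ)
    exact_mod_cast this
  have hl1 : (ρ : ℝ) ≤ Real.logb 2 (NN n a) := by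
    rw [Real.le_logb_iff_rpow_le (by norm_num) hN0, Real.rpow_natCast]
    exact hC.trans hN
  have hl2 : Real.logb 2 (NN n a) ≤ 2 * ρ * Real.logb 2 n := by
    have := Real.logb_le_logb_of_le (b := 2) (by norm_num) hN0 hNupp
    rw [Real.logb_pow] at this
    push_cast at this
    exact this
  have hlogn : 0 < Real.logb 2 (n : ℝ) := Real.logb_pos (by norm_num) (by linarith)
  have hl3 : Real.logb 2 n / 2 ≤ Real.logb 2 (Real.logb 2 (NN n a)) := by
    have h1 := Real.logb_le_logb_of_le (b := 2) (by norm_num)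
      (Real.sqrt_pos.2 (by linarith)) (hsq.trans hl1)
    rwa [Real.sqrt_eq_rpow, Real.logb_rpow_eq_mul_logb_of_pos (by linarith),
      one_div_mul_eq_div] at h1
  have hexp : ε₀ / Real.logb 2 (Real.logb 2 (NN n a)) * Real.logb 2 (NN n a) ≤ 4 * ε₀ * ρ := by
    rw [div_mul_eq_mul_div, div_le_iff₀ (by linarith)]
    calc ε₀ * Real.logb 2 (NN n a) ≤ ε₀ * (2 * ρ * Real.logb 2 n) := by gcongr
      _ = 4 * ε₀ * ρ * (Real.logb 2 n / 2) := by ring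
      _ ≤ _ := by gcongr
  have hpow : (2 : ℝ) ^ (-(4 * ε₀ * ρ)) ≤
      (NN n a : ℝ) ^ (-(ε₀ / Real.logb 2 (Real.logb 2 (NN n a)))) := by
    have h1 : (NN n a : ℝ) = (2 : ℝ) ^ Real.logb 2 (NN n a) :=
      (Real.rpow_logb (by norm_num) (by norm_num) hN0).symm
    have h2 : (NN n a : ℝ) ^ (-(ε₀ / Real.logb 2 (Real.logb 2 (NN n a)))) =
        (2 : ℝ) ^ (Real.logb 2 (NN n a) * (-(ε₀ / Real.logb 2 (Real.logb 2 (NN n a))))) := by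
      rw [Real.rpow_mul (by norm_num), ← h1]
    rw [h2]
    refine Real.rpow_le_rpow_of_exponent_le (by norm_num) ?_
    linarith
  have hk : (n.choose ρ : ℝ) * (2 : ℝ) ^ (-(4 * ε₀ * ρ)) ≤ kprime n a ε₀ := by
    unfold kprime kk
    exact mul_le_mul_of_nonneg_left hpow hC0.le
  have h2 : (2 : ℝ) ≤ (n.choose ρ : ℝ) * (2 : ℝ) ^ (-(4 * ε₀ * ρ)) := by
    calc (2 : ℝ) = (2 : ℝ) ^ (1 : ℝ) := by simp
      _ ≤ (2 : ℝ) ^ ((ρ : ℝ) + -(4 * ε₀ * ρ)) := by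
        refine Real.rpow_le_rpow_of_exponent_le (by norm_num) ?_
        nlinarith
      _ = (2 : ℝ) ^ ρ * (2 : ℝ) ^ (-(4 * ε₀ * ρ)) := by
        rw [Real.rpow_add (by norm_num), Real.rpow_natCast]
      _ ≤ _ := by gcongr
  have h3 := Nat.lt_floor_add_one (kprime n a ε₀)
  linarith

theorem rpow_le_exp_mul (x y : ℝ) (hx : 0 < x) (hy : 0 ≤ y) : x ^ y ≤ Real.exp (x * y) := by
  rw [Real.rpow_def_of_pos hx, Real.exp_le_exp]
  exact mul_le_mul_of_nonneg_right (Real.log_le_self hx.le) hy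

/-- The upper bound on `|Q|` from counting (with `B ≤ (1 - η/8) n`) contradicts the lower bound
coming from `|S|`. -/
theorem counting_contradiction (η a κ n B s X l C : ℝ) (ρ : ℕ) (hη : 0 < η) (hη1 : η < 1)
    (ha : 1 ≤ a) (hκ : 0 < κ) (hl : 0 ≤ l) (hB0 : 0 ≤ B)
    (hs : C * (2 : ℝ) ^ (-(4 * (η / 256) * ρ)) ≤ 2 * s)
    (hsX : s ≤ 4 * (2 : ℝ) ^ l * X) (hlκ : κ * ρ * l ≤ n)
    (hcount : (ρ.factorial : ℝ) * X ≤ (2 * a) ^ (2 * (η / (256 * a)) * ρ) * B ^ ρ)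
    (hB : B ≤ (1 - η / 8) * n)
    (hC : (n - ρ) ^ ρ ≤ ρ.factorial * C)
    (hρ1 : ρ ≤ η / 16 * n) (hρ2 : n ≤ κ * (η / 256) * ρ ^ 2) (hρ3 : 3 ≤ η / 256 * ρ) :
    False := by
  have hρ0 : (0 : ℝ) < ρ := by
    rcases Nat.eq_zero_or_pos ρ with h | h
    · rw [h] at hρ3; norm_num at hρ3
    · exact_mod_cast h
  have hnρ : 0 < n - ρ := by nlinarith
  have hBn : B ≤ (1 - η / 16) * (n - ρ) := by nlinarith
  have hlρ : l ≤ η / 256 * ρ := by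
    have : κ * ρ * l ≤ κ * ρ * (η / 256 * ρ) := by
      refine (hlκ.trans hρ2).trans (le_of_eq (by ring))
    exact le_of_mul_le_mul_left this (by positivity)
  have e1 : (8 : ℝ) ≤ Real.exp (η / 256 * ρ) := by
    have h1 : (2 : ℝ) ≤ Real.exp 1 := by linarith [Real.add_one_le_exp (1 : ℝ)]
    have h2 : Real.exp 3 = Real.exp 1 ^ 3 := by rw [← Real.exp_nat_mul]; norm_num
    have h3 : (2 : ℝ) ^ 3 ≤ Real.exp 1 ^ 3 := by gcongr
    have h4 := Real.exp_le_exp.2 hρ3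
    linarith
  have hexp2 : ∀ y : ℝ, 0 ≤ y → (2 : ℝ) ^ y ≤ Real.exp y := by
    intro y hy
    rw [Real.rpow_def_of_pos (by norm_num), Real.exp_le_exp]
    nlinarith [Real.log_two_lt_d9]
  have e2 : (2 : ℝ) ^ l ≤ Real.exp (η / 256 * ρ) :=
    (hexp2 l hl).trans (Real.exp_le_exp.2 hlρ)
  have e3 : (2 : ℝ) ^ (4 * (η / 256) * ρ) ≤ Real.exp (4 * (η / 256) * ρ) :=
    hexp2 _ (by positivity)
  have e4 : (2 * a) ^ (2 * (η / (256 * a)) * ρ) ≤ Real.exp (η / 64 * ρ) := by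
    refine (rpow_le_exp_mul _ _ (by linarith) (by positivity)).trans (le_of_eq ?_)
    congr 1
    field_simp
    ring
  have e5 : (1 - η / 16) ^ ρ ≤ Real.exp (-(η / 16) * ρ) := by
    rw [mul_comm, Real.exp_nat_mul]
    gcongr
    · linarith
    · linarith [Real.add_one_le_exp (-(η / 16))]
  set f : ℝ := (ρ.factorial : ℝ) with hf
  have hf0 : 0 < f := by rw [hf]; exact_mod_cast Nat.factorial_pos ρ
  have hP : (2 : ℝ) ^ (-(4 * (η / 256) * ρ)) * (2 : ℝ) ^ (4 * (η / 256) * ρ) = 1 := by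
    rw [← Real.rpow_add (by norm_num)]; simp
  set P := (2 : ℝ) ^ (4 * (η / 256) * ρ)
  set P' := (2 : ℝ) ^ (-(4 * (η / 256) * ρ))
  have hP0 : 0 < P := by positivity
  have hCs : C ≤ 2 * s * P := by
    calc C = C * P' * P := by rw [mul_assoc, hP, mul_one]
      _ ≤ _ := by gcongr
  have hpos : 0 < (n - ρ) ^ ρ := by positivity
  have key : (n - ρ) ^ ρ ≤ (Real.exp (η / 256 * ρ) * Real.exp (η / 256 * ρ) *
      Real.exp (4 * (η / 256) * ρ) * Real.exp (η / 64 * ρ) * Real.exp (-(η / 16) * ρ)) *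
        (n - ρ) ^ ρ := by
    calc (n - ρ) ^ ρ ≤ f * C := hC
      _ ≤ f * (2 * (4 * (2 : ℝ) ^ l * X) * P) := by
        gcongr
        refine hCs.trans ?_
        gcongr
      _ = 8 * (2 : ℝ) ^ l * P * (f * X) := by ring
      _ ≤ 8 * (2 : ℝ) ^ l * P * ((2 * a) ^ (2 * (η / (256 * a)) * ρ) *
            ((1 - η / 16) * (n - ρ)) ^ ρ) := by
        refine mul_le_mul_of_nonneg_left (hcount.trans ?_) (by positivity)
        gcongr
      _ = 8 * (2 : ℝ) ^ l * P * (2 * a) ^ (2 * (η / (256 * a)) * ρ) *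
            (1 - η / 16) ^ ρ * (n - ρ) ^ ρ := by rw [mul_pow]; ring
      _ ≤ _ := by
        have : 0 ≤ 1 - η / 16 := by linarith
        gcongr
  rw [← Real.exp_add, ← Real.exp_add, ← Real.exp_add, ← Real.exp_add] at key
  have h1 : 1 ≤ Real.exp (η / 256 * ρ + η / 256 * ρ + 4 * (η / 256) * ρ + η / 64 * ρ
      + -(η / 16) * ρ) := by
    refine le_of_mul_le_mul_right ?_ hpos
    linarith
  have h2 := Real.one_le_exp_iff.1 h1
  have h3 : 0 < η * ρ := by positivity
  linarith

/-! ### Soundness -/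

/-- Soundness of the reduction: for every finite alphabet, degree d, and
η > 0 there are ε₀, δ > 0 such that for all large n, if ψ is d-regular with OPT(ψ) < 1 − η,
then every vertex set S of the product graph with |S| = ⌊k·N^(−ε₀/log log N)⌋ has
den(S) < 1 − δ. -/
theorem statement_1 (A : Type) [Fintype A] [DecidableEq A] (hA : 2 ≤ Fintype.card A)
    (d : ℕ) (η : ℝ) (hη : 0 < η) :
    ∃ ε₀ > (0 : ℝ), ∃ δ > (0 : ℝ), ∃ n₀ : ℕ, ∀ n ≥ n₀, ∀ ψ : CSP n A,
      Regular ψ d →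
      (∀ τ : Fin n → A, (nSat ψ τ : ℝ) < (1 - η) * (nEdg ψ : ℝ)) →
      ∀ S : Finset (Vtx n (rho n) A),
        S.card = ⌊kprime n (Fintype.card A) ε₀⌋₊ →
        den ψ S < 1 - δ := by
  have : Nonempty A := Fintype.card_pos_iff.1 (by omega)
  rcases le_or_gt 1 η with hη1 | hη1
  · -- no assignment can satisfy less than a nonpositive fraction of the constraints
    refine ⟨1, one_pos, 1, one_pos, 0, fun n _ ψ _ hopt => ?_⟩
    have h1 := hopt fun _ => Classical.arbitrary A
    have h2 : (1 - η) * (nEdg ψ : ℝ) ≤ 0 :=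
      mul_nonpos_of_nonpos_of_nonneg (by linarith) (Nat.cast_nonneg _)
    have h3 : (0 : ℝ) ≤ nSat ψ fun _ => Classical.arbitrary A := Nat.cast_nonneg _
    linarith
  set a : ℝ := (Fintype.card A : ℝ) with ha
  have ha1 : 1 ≤ a := by rw [ha]; exact_mod_cast (by omega : 1 ≤ Fintype.card A)
  set ε : ℝ := η / (256 * a) with hε
  have hε0 : 0 < ε := by positivity
  -- `κ` is chosen so that the uncovered part of `Ustar` has at most `ηn / (8a)` elements
  set κ : ℝ := ε * η / (24 * a) with hκ
  have hκ0 : 0 < κ := by positivity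
  set c : ℝ := min (κ * (η / 256)) (η / 768) with hc
  have hc0 : 0 < c := by positivity
  obtain ⟨n₁, hn₁⟩ := rho_asymptotics c hc0
  refine ⟨η / 256, by positivity, κ / 4, by positivity, max n₁ (max 2 (Fintype.card A)), ?_⟩
  intro n hn ψ hreg hopt S hS
  obtain ⟨hn1, hn2⟩ := max_le_iff.1 hn
  obtain ⟨hn2, hna⟩ := max_le_iff.1 hn2
  obtain ⟨hsq, hρ2, hρ1, hρ3⟩ := hn₁ n hn1
  have hc1 : c ≤ κ * (η / 256) := min_le_left _ _
  have hc2 : c ≤ η / 768 := min_le_right _ _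
  have hn0 : (0 : ℝ) < n := by exact_mod_cast (by omega : 0 < n)
  have hr3 : 3 ≤ η / 256 * rho n := by
    have := mul_le_mul_of_nonneg_right hc2 (Nat.cast_nonneg (α := ℝ) (rho n))
    linarith
  have hr768 : (768 : ℝ) ≤ rho n := by
    have := Nat.cast_nonneg (α := ℝ) (rho n)
    nlinarith
  have hr2 : 2 ≤ rho n := by
    have : (2 : ℝ) ≤ rho n := by linarith
    exact_mod_cast this
  have hrn : (rho n : ℝ) ≤ η / 768 * n := hρ1.trans (by gcongr)
  have hrn3 : 3 * rho n ≤ n := by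
    have : (3 : ℝ) * rho n ≤ n := by nlinarith
    exact_mod_cast this
  have hSlow := kprime_lower n (Fintype.card A) (η / 256) (by positivity) (by linarith)
    (by omega) hna hn2 hr2 hrn3 hsq
  rw [← hS] at hSlow
  have hSne : S.Nonempty := by
    rw [← Finset.card_pos]
    have h1 : (0 : ℝ) < (n.choose (rho n) : ℝ) := by
      exact_mod_cast Nat.choose_pos (by omega)
    have h2 : (0 : ℝ) < 2 * (S.card : ℝ) := lt_of_lt_of_le (by positivity) hSlow
    have h3 : (0 : ℝ) < S.card := by linarith
    exact_mod_cast h3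
  by_contra! hden
  obtain ⟨L, Q, Us, hadj, hQ, hSQ, hLn, hD⟩ :=
    exists_list ψ S hSne (by omega) (by omega) ε κ hε0 hκ0 hden
  obtain ⟨τ, hτ, hE, hsat⟩ := exists_assignment ψ hreg L Q hadj
  have hW : ((cover L ∩ cover Q).card : ℝ) ≤ (1 - η / 2) * n := by
    have h1 := hopt τ
    by_contra! hcon
    have h2 : η * (nEdg ψ : ℝ) < 2 * d * (n - ((cover L ∩ cover Q).card : ℝ)) := by linarith
    have h3 : (2 : ℝ) * d * (n - ((cover L ∩ cover Q).card : ℝ)) ≤ 2 * d * (η / 2 * n) := by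
      gcongr
      linarith
    rw [hE] at h2
    linarith
  have hcount := factorial_mul_card_le (by omega) Q (cover L) Us τ _ hτ hQ
  refine counting_contradiction η a κ n _ S.card Q.card L.card (n.choose (rho n)) (rho n)
    hη hη1 ha1 hκ0 (Nat.cast_nonneg _) (by positivity) hSlow
    (by rw [Real.rpow_natCast]; exact hSQ) hLn hcount ?_
    (sub_pow_le_factorial_mul_choose n _ (by omega)) ?_ ?_ hr3
  · have h1 : a * ((Us \ cover L).card : ℝ) ≤ η / 8 * n := by
      refine le_of_mul_le_mul_left ?_ hε0
      calc ε * (a * ((Us \ cover L).card : ℝ)) = a * (ε * ((Us \ cover L).card : ℝ)) := by ring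
        _ ≤ a * (3 * κ * n) := by gcongr
        _ = ε * (η / 8 * n) := by rw [hκ]; field_simp; ring
    linarith
  · refine hrn.trans ?_
    gcongr
    norm_num
  · exact hρ2.trans (by gcongr)
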